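/- Let ν be an idempotent mean on ℕ and let (ν_k) be the associated sequence of means on ℕ_↗^k. Then for every k ≥ 1, ν_k assigns mass 1 to the set of pin-headed tuples; that is, ν_k applied to the indicator function of {(y_1 < ⋯ < y_k) : k = 1 or y_k − y_{k−1} ≥ 2} equals 1. -/

import Mathlib

/-!
The last gap `y_k - y_{k-1}` of a tuple distributed according to `ν_k` is distributed according
to `ν`, so the claim reduces to `ν` giving mass `1` to `{x | 2 ≤ x}`. By idempotence that mass
equals the mean over `(x, x')` of the indicator of `2 ≤ x + x'`, which is identically `1`
on positive integers.
-/

/-- `f` is a bounded real-valued function, i.e. an element of `ℓ^∞`. -/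
def Bdd {X : Type*} (f : X → ℝ) : Prop := ∃ C : ℝ, ∀ x, |f x| ≤ C

/-- A mean on a set `X`: a positive normalized linear functional on `ℓ^∞(X)`
(we represent it as a functional on all functions, constrained only on bounded ones). -/
def IsMean {X : Type*} (ν : (X → ℝ) → ℝ) : Prop :=
  (∀ f g : X → ℝ, Bdd f → Bdd g → ν (f + g) = ν f + ν g) ∧
  (∀ (c : ℝ) (f : X → ℝ), Bdd f → ν (c • f) = c * ν f) ∧
  (∀ f : X → ℝ, Bdd f → (∀ x, 0 ≤ f x) → 0 ≤ ν f) ∧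
  ν (fun _ => 1) = 1

/-- An idempotent mean on `ℕ = {1,2,…}` (modelled by `ℕ+`):
`ν(f) = ν(x ↦ ν(x' ↦ f(x+x')))` for every bounded `f`. -/
def IsIdempotent (ν : (ℕ+ → ℝ) → ℝ) : Prop :=
  ∀ f : ℕ+ → ℝ, Bdd f → ν f = ν (fun x => ν (fun x' => f (x + x')))

/-- The sequence of means on increasing tuples associated to a mean `ν` on `ℕ+`:
`seqMean ν k` is the mean `ν_{k+1}` on tuples of length `k+1` (so `seqMean ν 0 = ν_1 = ν`),
defined by `ν_{k+1}(f) = ν(x ↦ ν_k(f^x))` with `f^x(y_1,…,y_k) = f(y_1,…,y_k,y_k+x)`.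
(The values of the argument on non-increasing tuples are never used.) -/
noncomputable def seqMean (ν : (ℕ+ → ℝ) → ℝ) : (k : ℕ) → ((Fin (k + 1) → ℕ+) → ℝ) → ℝ
  | 0 => fun f => ν fun x => f fun _ => x
  | k + 1 => fun f =>
      ν fun x => seqMean ν k fun y => f (Fin.snoc y (y (Fin.last k) + x))

theorem mean_const {X : Type*} {ν : (X → ℝ) → ℝ} (hmean : IsMean ν) (c : ℝ) :
    ν (fun _ => c) = c := by
  have h := hmean.2.1 c (fun _ => 1) ⟨1, fun _ => by simp⟩
  have e : (c • fun _ : X => (1 : ℝ)) = fun _ => c := by ext; simp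
  rw [e, hmean.2.2.2, mul_one] at h
  exact h

theorem seqMean_const {ν : (ℕ+ → ℝ) → ℝ} (hmean : IsMean ν) (m : ℕ) (c : ℝ) :
    seqMean ν m (fun _ => c) = c := by
  induction m with
  | zero => exact mean_const hmean c
  | succ n ih =>
    simp only [seqMean, ih]
    exact mean_const hmean c

theorem idempotent_mean_two_le {ν : (ℕ+ → ℝ) → ℝ} (hmean : IsMean ν) (hidem : IsIdempotent ν) :
    ν (fun x => if 2 ≤ (x : ℕ) then (1 : ℝ) else 0) = 1 := by
  rw [hidem _ ⟨1, fun x => by split_ifs <;> simp⟩]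
  have h : ∀ x x' : ℕ+, 2 ≤ ((x + x' : ℕ+) : ℕ) := fun x x' => by
    have := x.pos
    have := x'.pos
    rw [PNat.add_coe]
    omega
  simp only [h, if_true, hmean.2.2.2]

/-- For every `k ≥ 1`, the mean `ν_k` (here `seqMean ν m` with `k = m+1`, a mean on
tuples of length `m+1`) gives mass `1` to the pin-headed tuples, i.e. those
`(y_1 < ⋯ < y_k)` with `k = 1` or `y_k − y_{k−1} ≥ 2`. -/
theorem stmt_6 (ν : (ℕ+ → ℝ) → ℝ) (hmean : IsMean ν) (hidem : IsIdempotent ν)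
    (m : ℕ) :
    seqMean ν m (fun y =>
      if m = 0 ∨ ((y (⟨m - 1, by omega⟩ : Fin (m + 1))) : ℕ) + 2 ≤ ((y (Fin.last m)) : ℕ)
      then (1 : ℝ) else 0) = 1 := by
  cases m with
  | zero => simpa using seqMean_const hmean 0 1
  | succ n =>
    have hidx : (⟨n + 1 - 1, by omega⟩ : Fin (n + 1 + 1)) = (Fin.last n).castSucc := by
      ext; simp
    rw [hidx]
    -- Only the last increment `x` matters, so the inner mean is taken of a constant.
    simp only [seqMean, Fin.snoc_castSucc, Fin.snoc_last, PNat.add_coe, add_le_add_iff_left,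
      Nat.succ_ne_zero, false_or, seqMean_const hmean]
    exact idempotent_mean_two_le hmean hidem
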